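/- Let p be a prime, λ a partition and i ∈ {0,…,p−1}. If λ does not have a removable i-node together with an addable i-node in a later ramp, then the partition obtained from λ^rest by removing all its normal i-nodes equals the p-restrictisation of the partition obtained from λ by removing all its removable i-nodes; that is, (λ^rest)^{▾i} = (λ^{▿i})^rest. -/

import Mathlib

/-- `f` represents a partition: weakly decreasing with finitely many nonzero parts.
`f r` is the `(r+1)`-th part (0-indexed). -/
def IsPartition (f : ℕ → ℕ) : Prop :=
  (∀ m n : ℕ, m ≤ n → f n ≤ f m) ∧ ∃ N, ∀ n, N ≤ n → f n = 0

/-- `(r, c)` (0-indexed) is a node of the Young diagram of `f`. -/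
def Cell (f : ℕ → ℕ) (r c : ℕ) : Prop := c < f r

/-- The ramp containing the 0-indexed node `(r, c)`; this equals `c-1+(p-1)(r-1)` in
the paper's 1-indexed convention. -/
def rampOf (p : ℕ) (r c : ℕ) : ℤ := (c : ℤ) + ((p : ℤ) - 1) * (r : ℤ)

/-- The `p`-residue of the node `(r, c)`. -/
def res (p : ℕ) (r c : ℕ) : ZMod p := (c : ZMod p) - (r : ZMod p)

/-- `(r, c)` is a removable node of `f`. -/
def Removable (f : ℕ → ℕ) (r c : ℕ) : Prop := c + 1 = f r ∧ f (r + 1) < f r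

/-- `(r, c)` is an addable node of `f`. -/
def Addable (f : ℕ → ℕ) (r c : ℕ) : Prop := c = f r ∧ (r = 0 ∨ f r < f (r - 1))

/-- `rmp_l(λ)`: the number of nodes of `λ` in ramp `l`. -/
noncomputable def rmp (p : ℕ) (f : ℕ → ℕ) (l : ℤ) : ℕ :=
  Set.ncard {q : ℕ × ℕ | Cell f q.1 q.2 ∧ rampOf p q.1 q.2 = l}

/-- `f` is `p`-restricted: successive differences of parts are `< p`. -/
def PRestricted (p : ℕ) (f : ℕ → ℕ) : Prop := ∀ r, f r < f (r + 1) + p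

/-- `g` is the `p`-restrictisation `f^rest` of `f`: the (unique) `p`-restricted
partition with the same number of nodes in each ramp as `f` (obtained by sliding
all nodes in each ramp as far towards the first row as possible). -/
def IsRest (p : ℕ) (f g : ℕ → ℕ) : Prop :=
  IsPartition g ∧ PRestricted p g ∧ ∀ l : ℤ, rmp p g l = rmp p f l

/-- Row `r` of `f` contains a removable node of residue `i`. -/
def RemRes (p : ℕ) (f : ℕ → ℕ) (i : ZMod p) (r : ℕ) : Prop :=
  ∃ c, Removable f r c ∧ res p r c = i

/-- Row `r` of `f` contains an addable node of residue `i`. -/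
def AddRes (p : ℕ) (f : ℕ → ℕ) (i : ZMod p) (r : ℕ) : Prop :=
  ∃ c, Addable f r c ∧ res p r c = i

/-- Row `r` of `f` contains a normal `i`-node: a removable `i`-node whose `−` sign
survives the reduction of the `i`-signature (read top to bottom, `+` for addable
`i`-nodes and `−` for removable `i`-nodes, successively deleting adjacent pairs `−+`);
equivalently, for every lower row `s` carrying an addable `i`-node, the number of
addable `i`-nodes in rows `(r, s]` is at most the number of removable `i`-nodes in
rows `(r, s)`. -/
def NormalRow (p : ℕ) (f : ℕ → ℕ) (i : ZMod p) (r : ℕ) : Prop :=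
  RemRes p f i r ∧ ∀ s, r < s → AddRes p f i s →
    Set.ncard {t : ℕ | r < t ∧ t ≤ s ∧ AddRes p f i t} ≤
      Set.ncard {t : ℕ | r < t ∧ t < s ∧ RemRes p f i t}

/-- The number of normal `i`-nodes of `f`. -/
noncomputable def norCount (p : ℕ) (f : ℕ → ℕ) (i : ZMod p) : ℕ :=
  Set.ncard {r : ℕ | NormalRow p f i r}

/-- The number of removable `i`-nodes of `f`. -/
noncomputable def remCount (p : ℕ) (f : ℕ → ℕ) (i : ZMod p) : ℕ :=
  Set.ncard {r : ℕ | RemRes p f i r}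

/-- `f` has a removable `i`-node together with an addable `i`-node in a strictly
later ramp. -/
def HasRemAddLater (p : ℕ) (f : ℕ → ℕ) (i : ZMod p) : Prop :=
  ∃ r c s d, Removable f r c ∧ res p r c = i ∧ Addable f s d ∧ res p s d = i ∧
    rampOf p r c < rampOf p s d

open Classical in
/-- `f` with all its normal `i`-nodes removed (`f^{▾i}`). -/
noncomputable def remNorm (p : ℕ) (i : ZMod p) (f : ℕ → ℕ) : ℕ → ℕ :=
  fun r => f r - (if NormalRow p f i r then 1 else 0)

open Classical in
/-- `f` with all its removable `i`-nodes removed (`f^{▿i}`). -/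
noncomputable def remRem (p : ℕ) (i : ZMod p) (f : ℕ → ℕ) : ℕ → ℕ :=
  fun r => f r - (if RemRes p f i r then 1 else 0)

/-!
Record row `r` of a partition by its row end, the ramp `f r + (p - 1) * r` of the first position to
its right. The numbers of nodes in the ramps determine, and are determined by, the multiset of row
ends, and a partition is `p`-restricted exactly when its row ends increase weakly; so `f^rest` is
obtained by sorting the row ends, and it suffices to compare how many rows of `f` and of `f^rest`
lose a node in each ramp.

A row ending at `m + 1` has a removable node in ramp `m` unless the next row ends at `m + p`, in
which case the next row has no addable node in ramp `m + p`. Hence the number of removable nodes in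
ramp `m` minus the number of addable nodes in ramp `m + p` is the same for `f` and `f^rest`. In
`f^rest` the `i`-signature lists the ramps in order, so that the removable nodes in ramp `m` stand
right before the addable nodes in ramp `m + p`. If `f` has a removable `i`-node in ramp `m`, then it
has no addable `i`-node in a later ramp, so from ramp `m` on the removable nodes of `f^rest` are at
least as many as the addable nodes they face: exactly the difference survives in ramp `m`, and this
is the number of removable nodes of `f` there. If `f` has none, nothing survives in ramp `m`.
-/

section Counting

variable {α β γ : Type*}

lemma ncard_le_ncard_of_forall_fiber_le {s : Set α} {t : Set β} (ht : t.Finite)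
    (φ : α → γ) (ψ : β → γ)
    (h : ∀ c, {a | a ∈ s ∧ φ a = c}.ncard ≤ {b | b ∈ t ∧ ψ b = c}.ncard) :
    s.ncard ≤ t.ncard := by
  classical
  obtain hs | hs := s.finite_or_infinite
  · lift s to Finset α using hs
    lift t to Finset β using ht
    have hfiber (c : γ) : (s.filter (φ · = c)).card ≤ (t.filter (ψ · = c)).card := by
      simpa only [← Set.ncard_coe_finset, Finset.coe_filter, Finset.mem_coe] using h c
    rw [Set.ncard_coe_finset, Set.ncard_coe_finset,
      Finset.card_eq_sum_card_fiberwise (t := s.image φ ∪ t.image ψ)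
        fun a ha ↦ Finset.mem_union_left _ (Finset.mem_image_of_mem φ ha),
      Finset.card_eq_sum_card_fiberwise (t := s.image φ ∪ t.image ψ)
        fun b hb ↦ Finset.mem_union_right _ (Finset.mem_image_of_mem ψ hb)]
    exact Finset.sum_le_sum fun c _ ↦ hfiber c
  · simp [hs.ncard]

lemma card_filter_le_card_filter_lt [LinearOrder α] (s : Finset α) (k : ℕ) :
    (s.filter fun a ↦ k ≤ (s.filter (a < ·)).card).card = s.card - k := by
  induction s using Finset.induction_on_min with
  | empty => simp
  | insert x s hx ih =>
    have hxs : x ∉ s := fun h ↦ lt_irrefl x (hx x h)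
    have above_min : (insert x s).filter (x < ·) = s := by
      rw [Finset.filter_insert, if_neg (lt_irrefl x), Finset.filter_true_of_mem hx]
    have above_of_mem {a : α} (ha : a ∈ s) : (insert x s).filter (a < ·) = s.filter (a < ·) := by
      rw [Finset.filter_insert, if_neg (hx a ha).asymm]
    have filter_rest : (s.filter fun a ↦ k ≤ ((insert x s).filter (a < ·)).card) =
        s.filter fun a ↦ k ≤ (s.filter (a < ·)).card :=
      Finset.filter_congr fun a ha ↦ by rw [above_of_mem ha]
    rw [Finset.filter_insert, above_min, filter_rest, Finset.card_insert_of_notMem hxs]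
    split_ifs with hk
    · rw [Finset.card_insert_of_notMem (by simp [hxs]), ih]
      omega
    · rw [ih]
      omega

lemma ncard_setOf_le_ncard_setOf_lt [LinearOrder α] {s : Set α} (hs : s.Finite) (k : ℕ) :
    {a | a ∈ s ∧ k ≤ {b | b ∈ s ∧ a < b}.ncard}.ncard = s.ncard - k := by
  lift s to Finset α using hs
  have hcoe (a : α) : {b | b ∈ (s : Set α) ∧ a < b} = ↑(s.filter (a < ·)) := by
    ext
    simp
  simp only [hcoe, Set.ncard_coe_finset, ← card_filter_le_card_filter_lt s k]
  rw [← Set.ncard_coe_finset, Finset.coe_filter]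
  rfl

lemma eq_of_monotone_of_ncard_setOf_le_eq [LinearOrder α] [PartialOrder β] {b c : α → β}
    (hb : Monotone b) (hc : Monotone c) (hbfin : ∀ m, {a | b a ≤ m}.Finite)
    (hcfin : ∀ m, {a | c a ≤ m}.Finite)
    (h : ∀ m, {a | b a ≤ m}.ncard = {a | c a ≤ m}.ncard) : b = c := by
  have hsublevel (m : β) : {a | b a ≤ m} = {a | c a ≤ m} := by
    have hbl : IsLowerSet {a | b a ≤ m} := fun _ _ hle ha ↦ (hb hle).trans ha
    have hcl : IsLowerSet {a | c a ≤ m} := fun _ _ hle ha ↦ (hc hle).trans ha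
    obtain hbc | hcb := hbl.total hcl
    · exact Set.eq_of_subset_of_ncard_le hbc (h m).ge (hcfin m)
    · exact (Set.eq_of_subset_of_ncard_le hcb (h m).le (hbfin m)).symm
  funext a
  have hle (m : β) : b a ≤ m ↔ c a ≤ m := Set.ext_iff.1 (hsublevel m) a
  exact le_antisymm ((hle _).2 le_rfl) ((hle _).1 le_rfl)

end Counting

section RowEnd

variable {p : ℕ} {f : ℕ → ℕ}

/-- The ramp of the first position to the right of row `r`, that is `rampOf p r (f r)`. It takes
values in `ℕ`, so it is meaningful only for `0 < p`, where `p - 1` is not truncated. -/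
def rowEnd (p : ℕ) (f : ℕ → ℕ) (r : ℕ) : ℕ := f r + (p - 1) * r

lemma rampOf_eq_natCast (hp : 0 < p) (r c : ℕ) :
    rampOf p r c = ((c + (p - 1) * r : ℕ) : ℤ) := by
  push_cast [rampOf, Nat.cast_pred hp]
  rfl

lemma rowEnd_injective (p : ℕ) : Function.Injective (rowEnd p) :=
  fun _ _ h ↦ funext fun r ↦ Nat.add_right_cancel (congrFun h r)

lemma le_rowEnd (hp : 1 < p) (f : ℕ → ℕ) (r : ℕ) : r ≤ rowEnd p f r :=
  (Nat.le_mul_of_pos_left r (Nat.sub_pos_of_lt hp)).trans (Nat.le_add_left _ _)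

lemma finite_of_forall_rowEnd_le (hp : 1 < p) {s : Set ℕ} {m : ℕ}
    (h : ∀ r ∈ s, rowEnd p f r ≤ m) : s.Finite :=
  (Set.finite_Iic m).subset fun r hr ↦ (le_rowEnd hp f r).trans (h r hr)

lemma lt_iff_rowEnd_succ_lt (r : ℕ) :
    f (r + 1) < f r ↔ rowEnd p f (r + 1) < rowEnd p f r + (p - 1) := by
  simp only [rowEnd, mul_add]
  omega

lemma PRestricted.monotone_rowEnd (hf : PRestricted p f) : Monotone (rowEnd p f) := by
  refine monotone_nat_of_le_succ fun r ↦ ?_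
  have := hf r
  simp only [rowEnd, mul_add]
  omega

end RowEnd

section RampCounts

variable {p : ℕ} {f g : ℕ → ℕ}

/-- The number of rows of `f` ending at or before ramp `l`, in the sense of `rowEnd`. -/
noncomputable def rowCount (p : ℕ) (f : ℕ → ℕ) (l : ℕ) : ℕ := {r | rowEnd p f r ≤ l}.ncard

lemma rmp_eq_ncard (hp : 0 < p) (f : ℕ → ℕ) (l : ℕ) :
    rmp p f l = {r | (p - 1) * r ≤ l ∧ l < rowEnd p f r}.ncard := by
  have hinj : Function.Injective fun r : ℕ ↦ (r, l - (p - 1) * r) :=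
    fun _ _ h ↦ congrArg Prod.fst h
  rw [rmp, ← Set.ncard_image_of_injective _ hinj]
  congr 1
  ext ⟨r, c⟩
  simp only [Set.mem_ofPred_eq, Set.mem_image, Prod.mk.injEq, Cell, rampOf_eq_natCast hp,
    Nat.cast_inj, rowEnd]
  constructor
  · rintro ⟨hc, rfl⟩
    exact ⟨r, by omega, rfl, by omega⟩
  · rintro ⟨r, ⟨hle, hlt⟩, rfl, rfl⟩
    omega

lemma rowCount_add_rmp (hp : 1 < p) (f : ℕ → ℕ) (l : ℕ) :
    rowCount p f l + rmp p f l = {r | (p - 1) * r ≤ l}.ncard := by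
  have hfin : {r | (p - 1) * r ≤ l}.Finite :=
    finite_of_forall_rowEnd_le (f := 0) hp fun r hr ↦ by simpa [rowEnd] using hr
  have hended : {r | rowEnd p f r ≤ l} = {r | (p - 1) * r ≤ l} ∩ {r | rowEnd p f r ≤ l} :=
    (Set.inter_eq_right.2 fun r hr ↦ (Nat.le_add_left _ (f r)).trans hr).symm
  have hmeeting : {r | (p - 1) * r ≤ l ∧ l < rowEnd p f r} =
      {r | (p - 1) * r ≤ l} \ {r | rowEnd p f r ≤ l} := by
    ext r
    simp
  rw [rowCount, rmp_eq_ncard (by omega), hmeeting, hended, Set.sdiff_self_inter,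
    Set.ncard_inter_add_ncard_sdiff_eq_ncard _ _ hfin]

lemma rowCount_eq_of_rmp_eq (hp : 1 < p) (h : ∀ l : ℤ, rmp p g l = rmp p f l) :
    rowCount p g = rowCount p f := by
  funext l
  have hf := rowCount_add_rmp hp f l
  have hg := rowCount_add_rmp hp g l
  have := h l
  omega

lemma rowCount_succ (hp : 1 < p) (f : ℕ → ℕ) (l : ℕ) :
    rowCount p f (l + 1) = rowCount p f l + {r | rowEnd p f r = l + 1}.ncard := by
  rw [rowCount, rowCount, ← Set.ncard_union_eq ?_ ?_ ?_]
  · congr 1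
    ext r
    exact Nat.le_succ_iff
  · exact Set.disjoint_left.2 fun r hle heq ↦ l.not_succ_le_self (heq.symm.trans_le hle)
  · exact finite_of_forall_rowEnd_le hp fun _ hr ↦ hr
  · exact finite_of_forall_rowEnd_le hp fun _ hr ↦ hr.le

lemma ncard_rowEnd_eq_of_rowCount_eq (hp : 1 < p) (h : rowCount p g = rowCount p f) {l : ℕ}
    (hl : 0 < l) : {r | rowEnd p g r = l}.ncard = {r | rowEnd p f r = l}.ncard := by
  obtain ⟨l, rfl⟩ := Nat.exists_eq_add_one.2 hl
  have hf := rowCount_succ hp f l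
  have hg := rowCount_succ hp g l
  rw [h] at hg
  omega

lemma PRestricted.eq_of_rowCount_eq (hp : 1 < p) (hf : PRestricted p f) (hg : PRestricted p g)
    (h : rowCount p f = rowCount p g) : f = g :=
  rowEnd_injective p <| eq_of_monotone_of_ncard_setOf_le_eq hf.monotone_rowEnd hg.monotone_rowEnd
    (fun _ ↦ finite_of_forall_rowEnd_le hp fun _ ↦ id)
    (fun _ ↦ finite_of_forall_rowEnd_le hp fun _ ↦ id) (congrFun h)

lemma rowCount_sub_ite (hp : 1 < p) (P : ℕ → Prop) [DecidablePred P] (hP : ∀ r, P r → 0 < f r)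
    (m : ℕ) : rowCount p (fun r ↦ f r - if P r then 1 else 0) m =
      rowCount p f m + {r | P r ∧ rowEnd p f r = m + 1}.ncard := by
  rw [rowCount, rowCount, ← Set.ncard_union_eq ?_ ?_ ?_]
  · congr 1
    ext r
    simp only [Set.mem_union, Set.mem_ofPred_eq, rowEnd]
    by_cases hr : P r
    · have := hP r hr
      simp only [hr, if_true, true_and]
      omega
    · simp only [hr, if_false, false_and, or_false, Nat.sub_zero]
  · exact Set.disjoint_left.2 fun r hle heq ↦ m.not_succ_le_self (heq.2.symm.trans_le hle)
  · exact finite_of_forall_rowEnd_le hp fun _ hr ↦ hr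
  · exact finite_of_forall_rowEnd_le hp fun _ hr ↦ hr.2.le

end RampCounts

section RampNodes

variable {p : ℕ} {f : ℕ → ℕ} {i : ZMod p} {m r : ℕ}

/-- The rows of `f` whose removable node lies in ramp `m`. -/
def removableRows (p : ℕ) (f : ℕ → ℕ) (m : ℕ) : Set ℕ :=
  {r | ∃ c, Removable f r c ∧ rampOf p r c = m}

/-- The rows of `f` whose addable node lies in ramp `m`. -/
def addableRows (p : ℕ) (f : ℕ → ℕ) (m : ℕ) : Set ℕ :=
  {r | ∃ c, Addable f r c ∧ rampOf p r c = m}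

lemma mem_removableRows (hp : 0 < p) :
    r ∈ removableRows p f m ↔ f (r + 1) < f r ∧ rowEnd p f r = m + 1 := by
  simp only [removableRows, Removable, rampOf_eq_natCast hp, Nat.cast_inj, rowEnd,
    Set.mem_ofPred_eq]
  constructor
  · rintro ⟨c, ⟨hc, hlt⟩, rfl⟩
    omega
  · rintro ⟨hlt, hr⟩
    exact ⟨f r - 1, by omega, by omega⟩

lemma mem_addableRows (hp : 0 < p) :
    r ∈ addableRows p f m ↔ (r = 0 ∨ f r < f (r - 1)) ∧ rowEnd p f r = m := by
  simp only [addableRows, Addable, rampOf_eq_natCast hp, Nat.cast_inj, rowEnd, Set.mem_ofPred_eq]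
  constructor
  · rintro ⟨c, ⟨rfl, hr⟩, rfl⟩
    exact ⟨hr, rfl⟩
  · rintro ⟨hr, hm⟩
    exact ⟨f r, ⟨rfl, hr⟩, hm⟩

lemma finite_removableRows (hp : 1 < p) : (removableRows p f m).Finite :=
  finite_of_forall_rowEnd_le hp fun _ hr ↦ ((mem_removableRows hp.pos).1 hr).2.le

lemma finite_addableRows (hp : 1 < p) : (addableRows p f m).Finite :=
  finite_of_forall_rowEnd_le hp fun _ hr ↦ ((mem_addableRows hp.pos).1 hr).2.le

lemma intCast_rampOf (p r c : ℕ) : ((rampOf p r c : ℤ) : ZMod p) = res p r c := by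
  push_cast [rampOf, res, ZMod.natCast_self]
  ring

lemma remRes_iff_exists_mem_removableRows (hp : 0 < p) :
    RemRes p f i r ↔ ∃ m : ℕ, (m : ZMod p) = i ∧ r ∈ removableRows p f m := by
  constructor
  · rintro ⟨c, hc, rfl⟩
    refine ⟨c + (p - 1) * r, ?_, c, hc, rampOf_eq_natCast hp r c⟩
    rw [← intCast_rampOf, rampOf_eq_natCast hp, Int.cast_natCast]
  · rintro ⟨m, rfl, c, hc, hm⟩
    exact ⟨c, hc, by rw [← intCast_rampOf, hm, Int.cast_natCast]⟩

lemma remRes_and_rowEnd_eq_iff (hp : 0 < p) :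
    RemRes p f i r ∧ rowEnd p f r = m + 1 ↔ (m : ZMod p) = i ∧ r ∈ removableRows p f m := by
  rw [remRes_iff_exists_mem_removableRows hp]
  constructor
  · rintro ⟨⟨n, hn, hr⟩, hm⟩
    obtain rfl : n = m := Nat.succ_injective (((mem_removableRows hp).1 hr).2.symm.trans hm)
    exact ⟨hn, hr⟩
  · rintro ⟨hm, hr⟩
    exact ⟨⟨m, hm, hr⟩, ((mem_removableRows hp).1 hr).2⟩

lemma addRes_and_rowEnd_eq_iff (hp : 0 < p) :
    AddRes p f i r ∧ rowEnd p f r = m ↔ (m : ZMod p) = i ∧ r ∈ addableRows p f m := by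
  constructor
  · rintro ⟨⟨c, hc, rfl⟩, rfl⟩
    obtain rfl := hc.1
    refine ⟨?_, f r, hc, rampOf_eq_natCast hp r (f r)⟩
    rw [← intCast_rampOf, rampOf_eq_natCast hp, Int.cast_natCast, rowEnd]
  · rintro ⟨rfl, hr⟩
    obtain ⟨c, hc, hm⟩ := id hr
    exact ⟨⟨c, hc, by rw [← intCast_rampOf, hm, Int.cast_natCast]⟩, ((mem_addableRows hp).1 hr).2⟩

lemma RemRes.pos (h : RemRes p f i r) : 0 < f r := by
  obtain ⟨c, hc, -⟩ := h
  exact hc.1 ▸ c.succ_pos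

lemma RemRes.not_addRes (hp : 1 < p) (h : RemRes p f i r) : ¬ AddRes p f i r := by
  have : Fact (1 < p) := ⟨hp⟩
  obtain ⟨m, hm, hr⟩ := (remRes_iff_exists_mem_removableRows hp.pos).1 h
  intro hadd
  have hm' := ((addRes_and_rowEnd_eq_iff hp.pos).1 ⟨hadd, ((mem_removableRows hp.pos).1 hr).2⟩).1
  simp [hm] at hm'

lemma rowCount_remRem (hp : 1 < p) (m : ℕ) :
    rowCount p (remRem p i f) m =
      rowCount p f m + {r | RemRes p f i r ∧ rowEnd p f r = m + 1}.ncard := by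
  classical exact rowCount_sub_ite hp _ (fun _ ↦ RemRes.pos) m

lemma rowCount_remNorm (hp : 1 < p) (m : ℕ) :
    rowCount p (remNorm p i f) m =
      rowCount p f m + {r | NormalRow p f i r ∧ rowEnd p f r = m + 1}.ncard := by
  classical exact rowCount_sub_ite hp _ (fun _ hr ↦ hr.1.pos) m

end RampNodes

section Conservation

variable {p : ℕ} {f g : ℕ → ℕ}

lemma ncard_removableRows_add_ncard_rowEnd_pair (hp : 1 < p) (hf : Antitone f) (m : ℕ) :
    (removableRows p f m).ncard +
      {r | rowEnd p f r = m + 1 ∧ rowEnd p f (r + 1) = m + p}.ncard =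
        {r | rowEnd p f r = m + 1}.ncard := by
  have hfin : {r | rowEnd p f r = m + 1}.Finite :=
    finite_of_forall_rowEnd_le hp fun _ hr ↦ hr.le
  have hsub : {r | rowEnd p f r = m + 1 ∧ rowEnd p f (r + 1) = m + p} ⊆
      {r | rowEnd p f r = m + 1} := fun r hr ↦ hr.1
  rw [← Set.ncard_sdiff_add_ncard_of_subset hsub hfin]
  congr 2
  ext r
  have hle := hf (Nat.le_add_right r 1)
  simp only [mem_removableRows hp.pos, Set.mem_sdiff, Set.mem_ofPred_eq, rowEnd, mul_add]
  omega

lemma ncard_addableRows_add_ncard_rowEnd_pair (hp : 1 < p) (hf : Antitone f) (m : ℕ) :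
    (addableRows p f (m + p)).ncard +
      {r | rowEnd p f r = m + 1 ∧ rowEnd p f (r + 1) = m + p}.ncard =
        {r | rowEnd p f r = m + p}.ncard := by
  have hfin : {r | rowEnd p f r = m + p}.Finite :=
    finite_of_forall_rowEnd_le hp fun _ hr ↦ hr.le
  set s := {r | rowEnd p f r = m + 1 ∧ rowEnd p f (r + 1) = m + p} with hs
  have hsub : Nat.succ '' s ⊆ {r | rowEnd p f r = m + p} :=
    Set.image_subset_iff.2 fun r hr ↦ hr.2
  rw [← Set.ncard_image_of_injective s Nat.succ_injective,
    ← Set.ncard_sdiff_add_ncard_of_subset hsub hfin]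
  congr 2
  ext r
  simp only [mem_addableRows hp.pos, Set.mem_sdiff, Set.mem_image, Set.mem_ofPred_eq, hs]
  cases r with
  | zero => simp
  | succ r =>
    have hle := hf (Nat.le_add_right r 1)
    simp only [Nat.succ_eq_add_one, add_left_inj, exists_eq_right, Nat.add_sub_cancel, rowEnd,
      mul_add, Nat.succ_ne_zero, false_or]
    omega

lemma ncard_removableRows_add_ncard_addableRows (hp : 1 < p) (hf : Antitone f) (hg : Antitone g)
    (h : rowCount p g = rowCount p f) (m : ℕ) :
    (removableRows p f m).ncard + (addableRows p g (m + p)).ncard =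
      (removableRows p g m).ncard + (addableRows p f (m + p)).ncard := by
  have hrem_f := ncard_removableRows_add_ncard_rowEnd_pair hp hf m
  have hrem_g := ncard_removableRows_add_ncard_rowEnd_pair hp hg m
  have hadd_f := ncard_addableRows_add_ncard_rowEnd_pair hp hf m
  have hadd_g := ncard_addableRows_add_ncard_rowEnd_pair hp hg m
  have hend_rem := ncard_rowEnd_eq_of_rowCount_eq hp h (Nat.add_one_pos m)
  have hend_add := ncard_rowEnd_eq_of_rowCount_eq hp h (Nat.add_pos_right m hp.pos)
  omega

end Conservation

section Normal

variable {p : ℕ} {g : ℕ → ℕ} {i : ZMod p} {m r : ℕ}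

lemma add_le_of_natCast_eq_of_lt {a b : ℕ} (h : (a : ZMod p) = b) (hab : a < b) : a + p ≤ b :=
  ((ZMod.natCast_eq_natCast_iff a b p).1 h).add_le_of_lt hab

lemma NormalRow.ncard_addableRows_le (hp : 1 < p) (hg : PRestricted p g)
    (hr : NormalRow p g i r) (hm : rowEnd p g r = m + 1) :
    (addableRows p g (m + p)).ncard ≤ {t | t ∈ removableRows p g m ∧ r < t}.ncard := by
  have hmono := hg.monotone_rowEnd
  obtain ⟨rfl, -⟩ := (remRes_and_rowEnd_eq_iff hp.pos).1 ⟨hr.1, hm⟩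
  obtain hempty | hne := (addableRows p g (m + p)).eq_empty_or_nonempty
  · simp [hempty]
  obtain ⟨s, hs, hmax⟩ := Set.exists_max_image _ id (finite_addableRows hp) hne
  have hrow_end {t : ℕ} (ht : t ∈ addableRows p g (m + p)) : rowEnd p g t = m + p :=
    ((mem_addableRows hp.pos).1 ht).2
  have hlt {t : ℕ} (ht : t ∈ addableRows p g (m + p)) : r < t :=
    hmono.reflect_lt (by have := hrow_end ht; omega)
  have hadd {t : ℕ} (ht : t ∈ addableRows p g (m + p)) : AddRes p g m t :=
    ((addRes_and_rowEnd_eq_iff hp.pos).2 ⟨by simp, ht⟩).1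
  calc (addableRows p g (m + p)).ncard
      ≤ {t | r < t ∧ t ≤ s ∧ AddRes p g m t}.ncard :=
        Set.ncard_le_ncard (fun t ht ↦ ⟨hlt ht, hmax t ht, hadd ht⟩)
          ((Set.finite_Iic s).subset fun t ht ↦ ht.2.1)
    _ ≤ {t | r < t ∧ t < s ∧ RemRes p g m t}.ncard := hr.2 s (hlt hs) (hadd hs)
    _ ≤ {t | t ∈ removableRows p g m ∧ r < t}.ncard := by
      refine Set.ncard_le_ncard ?_ ((finite_removableRows hp).subset fun t ht ↦ ht.1)
      rintro t ⟨hrt, hts, hrem⟩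
      obtain ⟨n, hn, ht⟩ := (remRes_iff_exists_mem_removableRows hp.pos).1 hrem
      have hend := ((mem_removableRows hp.pos).1 ht).2
      have hend_r := hmono hrt.le
      have hend_s := (hmono hts.le).trans_eq (hrow_end hs)
      obtain rfl | hmn := eq_or_lt_of_le (show m ≤ n by omega)
      · exact ⟨ht, hrt⟩
      · have := add_le_of_natCast_eq_of_lt hn.symm hmn
        omega

lemma normalRow_of_forall_ncard_addableRows_le (hp : 1 < p) (hg : PRestricted p g)
    (hr : r ∈ removableRows p g m)
    (h : ∀ n, m ≤ n → (n : ZMod p) = m →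
      (addableRows p g (n + p)).ncard ≤ {t | t ∈ removableRows p g n ∧ r < t}.ncard) :
    NormalRow p g m r := by
  have hmono := hg.monotone_rowEnd
  have hr_end := ((mem_removableRows hp.pos).1 hr).2
  refine ⟨(remRes_iff_exists_mem_removableRows hp.pos).2 ⟨m, rfl, hr⟩, fun s _ _ ↦ ?_⟩
  -- Match the addable nodes in ramp `n + p` with the removable nodes in ramp `n`.
  refine ncard_le_ncard_of_forall_fiber_le ((Set.finite_Iio s).subset fun t ht ↦ ht.2.1)
    (rowEnd p g) (fun t ↦ rowEnd p g t + (p - 1)) fun l ↦ ?_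
  obtain hempty | ⟨u, ⟨hru, hus, hu⟩, rfl⟩ :=
    {t | (r < t ∧ t ≤ s ∧ AddRes p g m t) ∧ rowEnd p g t = l}.eq_empty_or_nonempty
  · exact hempty ▸ by simp
  obtain ⟨hcast, -⟩ := (addRes_and_rowEnd_eq_iff hp.pos).1 ⟨hu, rfl⟩
  have hmp : m + p ≤ rowEnd p g u :=
    add_le_of_natCast_eq_of_lt hcast.symm (by have := hmono hru.le; omega)
  obtain ⟨n, hu_end⟩ := Nat.exists_eq_add_of_le' (le_of_add_le_right hmp)
  have hn : (n : ZMod p) = m := by simpa [hu_end] using hcast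
  calc {t | (r < t ∧ t ≤ s ∧ AddRes p g m t) ∧ rowEnd p g t = rowEnd p g u}.ncard
      ≤ (addableRows p g (n + p)).ncard :=
        Set.ncard_le_ncard (fun t ht ↦ ((addRes_and_rowEnd_eq_iff hp.pos).1
          ⟨ht.1.2.2, ht.2.trans hu_end⟩).2) (finite_addableRows hp)
    _ ≤ {t | t ∈ removableRows p g n ∧ r < t}.ncard := h n (by omega) hn
    _ ≤ _ := by
      refine Set.ncard_le_ncard ?_ ((Set.finite_Iio s).subset fun t ht ↦ ht.1.2.1)
      rintro t ⟨htn, hrt⟩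
      have ht_end := ((mem_removableRows hp.pos).1 htn).2
      have htu : t < u := hmono.reflect_lt (by omega)
      have hrem := (remRes_iff_exists_mem_removableRows hp.pos).2 ⟨n, hn, htn⟩
      exact ⟨⟨hrt, htu.trans_le hus, hrem⟩, show rowEnd p g t + (p - 1) = rowEnd p g u by omega⟩

lemma normalRow_iff_ncard_addableRows_le (hp : 1 < p) (hg : PRestricted p g)
    (hr : r ∈ removableRows p g m)
    (h : (addableRows p g (m + p)).ncard < (removableRows p g m).ncard →
      ∀ n, m < n → (n : ZMod p) = m →
        (addableRows p g (n + p)).ncard ≤ (removableRows p g n).ncard) :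
    NormalRow p g m r ↔
      (addableRows p g (m + p)).ncard ≤ {t | t ∈ removableRows p g m ∧ r < t}.ncard := by
  have hr_end := ((mem_removableRows hp.pos).1 hr).2
  refine ⟨fun hnormal ↦ hnormal.ncard_addableRows_le hp hg hr_end, fun hle ↦ ?_⟩
  have hlt : {t | t ∈ removableRows p g m ∧ r < t}.ncard < (removableRows p g m).ncard :=
    Set.ncard_lt_ncard ⟨fun t ht ↦ ht.1, fun hsub ↦ lt_irrefl r (hsub hr).2⟩
      (finite_removableRows hp)
  refine normalRow_of_forall_ncard_addableRows_le hp hg hr fun n hmn hn ↦ ?_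
  obtain rfl | hmn := eq_or_lt_of_le hmn
  · exact hle
  have hbelow : {t | t ∈ removableRows p g n ∧ r < t} = removableRows p g n := by
    refine Set.sep_eq_self_iff_mem_true.2 fun t ht ↦ hg.monotone_rowEnd.reflect_lt ?_
    have := ((mem_removableRows hp.pos).1 ht).2
    omega
  exact hbelow.symm ▸ h (hle.trans_lt hlt) n hmn hn

lemma ncard_normalRow (hp : 1 < p) (hg : PRestricted p g)
    (h : (addableRows p g (m + p)).ncard < (removableRows p g m).ncard →
      ∀ n, m < n → (n : ZMod p) = m →
        (addableRows p g (n + p)).ncard ≤ (removableRows p g n).ncard) :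
    {r | NormalRow p g m r ∧ rowEnd p g r = m + 1}.ncard =
      (removableRows p g m).ncard - (addableRows p g (m + p)).ncard := by
  rw [← ncard_setOf_le_ncard_setOf_lt (finite_removableRows hp)]
  congr 1
  ext r
  constructor
  · rintro ⟨hnormal, hend⟩
    have hr := ((remRes_and_rowEnd_eq_iff hp.pos).1 ⟨hnormal.1, hend⟩).2
    exact ⟨hr, (normalRow_iff_ncard_addableRows_le hp hg hr h).1 hnormal⟩
  · rintro ⟨hr, hle⟩
    exact ⟨(normalRow_iff_ncard_addableRows_le hp hg hr h).2 hle,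
      ((mem_removableRows hp.pos).1 hr).2⟩

lemma NormalRow.of_succ (hp : 1 < p) (hr : NormalRow p g i (r + 1))
    (hend : rowEnd p g r = rowEnd p g (r + 1)) : NormalRow p g i r := by
  have hnot_add := hr.1.not_addRes hp
  have hne {t : ℕ} (ht : AddRes p g i t) : t ≠ r + 1 := fun h ↦ hnot_add (h ▸ ht)
  have hrem : RemRes p g i r := by
    obtain ⟨m, hm, hmem⟩ := (remRes_iff_exists_mem_removableRows hp.pos).1 hr.1
    have hlt : g (r + 1) < g r := (lt_iff_rowEnd_succ_lt (p := p) r).2 (by omega)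
    exact (remRes_iff_exists_mem_removableRows hp.pos).2 ⟨m, hm, (mem_removableRows hp.pos).2
      ⟨hlt, hend.trans ((mem_removableRows hp.pos).1 hmem).2⟩⟩
  refine ⟨hrem, fun s hrs hs ↦ ?_⟩
  calc {t | r < t ∧ t ≤ s ∧ AddRes p g i t}.ncard
      ≤ {t | r + 1 < t ∧ t ≤ s ∧ AddRes p g i t}.ncard :=
        Set.ncard_le_ncard (fun t ht ↦ ⟨lt_of_le_of_ne ht.1 (hne ht.2.2).symm, ht.2⟩)
          ((Set.finite_Iic s).subset fun t ht ↦ ht.2.1)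
    _ ≤ {t | r + 1 < t ∧ t < s ∧ RemRes p g i t}.ncard :=
        hr.2 s (lt_of_le_of_ne hrs (hne hs).symm) hs
    _ ≤ {t | r < t ∧ t < s ∧ RemRes p g i t}.ncard :=
        Set.ncard_le_ncard (fun t ht ↦ ⟨by have := ht.1; omega, ht.2⟩)
          ((Set.finite_Iio s).subset fun t ht ↦ ht.2.1)

lemma PRestricted.remNorm (hp : 1 < p) (hg : PRestricted p g) (i : ZMod p) :
    PRestricted p (remNorm p i g) := by
  intro r
  have hlt := hg r
  have hpos : NormalRow p g i (r + 1) → 0 < g (r + 1) := fun hr ↦ hr.1.pos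
  have hup (hr : NormalRow p g i (r + 1)) (heq : g r + 1 = g (r + 1) + p) : NormalRow p g i r :=
    hr.of_succ hp (by simp only [rowEnd, mul_add]; omega)
  simp only [_root_.remNorm]
  split_ifs <;> grind

end Normal

section Restrictisation

variable {p : ℕ} {f g : ℕ → ℕ} {i : ZMod p}

lemma addableRows_eq_empty_of_not_hasRemAddLater (hno : ¬ HasRemAddLater p f i) {m n : ℕ}
    (hm : (m : ZMod p) = i) (hn : (n : ZMod p) = i) (hmn : m < n)
    (hrem : (removableRows p f m).Nonempty) : addableRows p f n = ∅ := by
  obtain ⟨r, c, hc, hcm⟩ := hrem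
  refine Set.eq_empty_of_forall_notMem fun s ⟨d, hd, hdn⟩ ↦ hno ⟨r, c, s, d, hc, ?_, hd, ?_, ?_⟩
  · rw [← intCast_rampOf, hcm, Int.cast_natCast, hm]
  · rw [← intCast_rampOf, hdn, Int.cast_natCast, hn]
  · rw [hcm, hdn]
    exact_mod_cast hmn

lemma ncard_normalRow_eq_ncard_removableRows (hp : 1 < p) (hf : Antitone f) {m : ℕ}
    (hno : ¬ HasRemAddLater p f m) (hg : Antitone g) (hgR : PRestricted p g)
    (h : rowCount p g = rowCount p f) :
    {r | NormalRow p g m r ∧ rowEnd p g r = m + 1}.ncard = (removableRows p f m).ncard := by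
  have hcons := ncard_removableRows_add_ncard_addableRows hp hf hg h
  have hcons_m := hcons m
  have hadd (hpos : 0 < (removableRows p f m).ncard) {n : ℕ} (hmn : m ≤ n)
      (hn : (n : ZMod p) = m) : (addableRows p f (n + p)).ncard = 0 := by
    rw [addableRows_eq_empty_of_not_hasRemAddLater hno rfl (by simpa using hn) (by omega)
      (Set.nonempty_of_ncard_ne_zero hpos.ne'), Set.ncard_empty]
  rw [ncard_normalRow hp hgR]
  · obtain hzero | hpos := (removableRows p f m).ncard.eq_zero_or_pos
    · omega
    · have := hadd hpos le_rfl rfl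
      omega
  · intro hlt n hmn hn
    have := hadd (by omega) hmn.le hn
    have := hcons n
    omega

lemma ncard_normalRow_eq_ncard_remRes (hp : 1 < p) (hf : Antitone f)
    (hno : ¬ HasRemAddLater p f i) (hg : Antitone g) (hgR : PRestricted p g)
    (h : rowCount p g = rowCount p f) (m : ℕ) :
    {r | NormalRow p g i r ∧ rowEnd p g r = m + 1}.ncard =
      {r | RemRes p f i r ∧ rowEnd p f r = m + 1}.ncard := by
  by_cases hm : (m : ZMod p) = i
  · subst hm
    simp only [remRes_and_rowEnd_eq_iff hp.pos, true_and, Set.ofPred_mem_eq,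
      ncard_normalRow_eq_ncard_removableRows hp hf hno hg hgR h]
  · have hnormal (r : ℕ) : ¬ (NormalRow p g i r ∧ rowEnd p g r = m + 1) :=
      fun hr ↦ hm ((remRes_and_rowEnd_eq_iff hp.pos).1 ⟨hr.1.1, hr.2⟩).1
    simp only [remRes_and_rowEnd_eq_iff hp.pos, hm, hnormal, false_and]

end Restrictisation

theorem stmt6_general {p : ℕ} (hp : 1 < p) {f : ℕ → ℕ} (hf : Antitone f) {i : ZMod p}
    (hno : ¬ HasRemAddLater p f i) {g : ℕ → ℕ} (hg : Antitone g) (hgR : PRestricted p g)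
    (hgf : ∀ l : ℤ, rmp p g l = rmp p f l) {h : ℕ → ℕ} (hhR : PRestricted p h)
    (hhf : ∀ l : ℤ, rmp p h l = rmp p (remRem p i f) l) :
    remNorm p i g = h := by
  have hcount := rowCount_eq_of_rmp_eq hp hgf
  refine (hgR.remNorm hp i).eq_of_rowCount_eq hp hhR (funext fun m ↦ ?_)
  calc rowCount p (remNorm p i g) m
      = rowCount p g m + {r | NormalRow p g i r ∧ rowEnd p g r = m + 1}.ncard :=
        rowCount_remNorm hp m
    _ = rowCount p f m + {r | RemRes p f i r ∧ rowEnd p f r = m + 1}.ncard := by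
        rw [hcount, ncard_normalRow_eq_ncard_remRes hp hf hno hg hgR hcount]
    _ = rowCount p (remRem p i f) m := (rowCount_remRem hp m).symm
    _ = rowCount p h m := by rw [rowCount_eq_of_rmp_eq hp hhf]

/-- If `λ` does not have a removable `i`-node together with an addable `i`-node in a
later ramp, then removing all normal `i`-nodes from `λ^rest` gives the
`p`-restrictisation of the partition obtained from `λ` by removing all its removable
`i`-nodes: `(λ^rest)^{▾i} = (λ^{▿i})^rest`. -/
theorem stmt6 (p : ℕ) (hp : p.Prime) (f : ℕ → ℕ) (hf : IsPartition f) (i : ZMod p)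
    (hno : ¬ HasRemAddLater p f i)
    (g : ℕ → ℕ) (hg : IsRest p f g)
    (h : ℕ → ℕ) (hh : IsRest p (remRem p i f) h) :
    remNorm p i g = h :=
  stmt6_general hp.one_lt hf.1 hno hg.1.1 hg.2.1 hg.2.2 hh.2.1 hh.2.2
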